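/- Let B ∈ ℂ^{M×M} and A ∈ ℂ^{N×N} be Hermitian matrices with eigenvalues μ₁, …, μ_M and λ₁, …, λ_N respectively, and suppose all MN products μᵢ·λⱼ are pairwise distinct. Let L ∈ ℂ^{MN×MN} be a Hermitian matrix. Then L commutes with the Kronecker product B ⊗ A if and only if L commutes with both B ⊗ I_N and I_M ⊗ A. -/

import Mathlib

open Matrix Kronecker

/-! The Kronecker product of eigenbases of `B` and `A` diagonalizes `B ⊗ A`, `B ⊗ 1` and `1 ⊗ A`
simultaneously. In that basis `B ⊗ A` has pairwise distinct diagonal entries, so a matrix commuting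
with it is diagonal, and diagonal matrices commute. -/

section Conjugation

variable {M : Type*} [Monoid M] {u : M}

theorem exists_semiconjBy_of_isUnit (hu : IsUnit u) (y : M) : ∃ x, SemiconjBy u x y := by
  obtain ⟨v, rfl⟩ := hu
  exact ⟨↑v⁻¹ * (y * v), v.mul_inv_cancel_left (y * v)⟩

theorem commute_iff_commute_of_semiconjBy {x x' y y' : M} (hu : IsUnit u)
    (hx : SemiconjBy u x x') (hy : SemiconjBy u y y') : Commute x' y' ↔ Commute x y := by
  rw [commute_iff_eq, commute_iff_eq, ← hu.mul_left_inj, ← hu.mul_right_inj (b := x * y),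
    (hx.mul_right hy).eq, (hy.mul_right hx).eq]

end Conjugation

section Diagonal

variable {n R : Type*} [Fintype n] [CommSemiring R]

theorem commute_of_isDiag {X Y : Matrix n n R} (hX : X.IsDiag) (hY : Y.IsDiag) :
    Commute X Y := by
  classical
  rw [← hX.diagonal_diag, ← hY.diagonal_diag]
  exact commute_diagonal _ _

variable [DecidableEq n] [IsCancelMulZero R]

theorem isDiag_of_commute_diagonal {L : Matrix n n R} {d : n → R}
    (hd : Function.Injective d) (h : Commute L (diagonal d)) : L.IsDiag := by
  intro i j hij
  have entry_eq : L i j * d j = L i j * d i := by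
    simpa only [mul_diagonal, diagonal_mul, mul_comm (d i)] using congr_fun₂ h.eq i j
  by_contra hL
  exact hij (hd (mul_left_cancel₀ hL entry_eq)).symm

theorem commute_of_commute_of_injective_diagonal {P C E L X : Matrix n n R} {d : n → R}
    (hP : IsUnit P) (hd : Function.Injective d) (hC : SemiconjBy P (diagonal d) C)
    (hX : X.IsDiag) (hE : SemiconjBy P X E) (hLC : Commute L C) : Commute L E := by
  obtain ⟨L', hL⟩ := exists_semiconjBy_of_isUnit hP L
  have hL_diag : L'.IsDiag :=
    isDiag_of_commute_diagonal hd ((commute_iff_commute_of_semiconjBy hP hL hC).mp hLC)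
  exact (commute_iff_commute_of_semiconjBy hP hL hE).mpr (commute_of_isDiag hL_diag hX)

end Diagonal

theorem semiconjBy_eigenvectorUnitary {n 𝕜 : Type*} [RCLike 𝕜] [Fintype n] [DecidableEq n]
    {A : Matrix n n 𝕜} (hA : A.IsHermitian) :
    SemiconjBy (hA.eigenvectorUnitary : Matrix n n 𝕜)
      (diagonal (RCLike.ofReal ∘ hA.eigenvalues)) A := by
  rw [SemiconjBy, ← hA.conjStarAlgAut_star_eigenvectorUnitary, Unitary.conjStarAlgAut_star_apply,
    ← mul_assoc, ← mul_assoc, ← Unitary.coe_star, Unitary.coe_mul_star_self, one_mul]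

section Kronecker

variable {m n R : Type*} [Fintype m] [Fintype n] [CommSemiring R]

theorem semiconjBy_kronecker {P X B : Matrix m m R} {Q Y A : Matrix n n R}
    (hB : SemiconjBy P X B) (hA : SemiconjBy Q Y A) :
    SemiconjBy (P ⊗ₖ Q) (X ⊗ₖ Y) (B ⊗ₖ A) := by
  rw [SemiconjBy, ← mul_kronecker_mul, ← mul_kronecker_mul, hB.eq, hA.eq]

variable [DecidableEq m] [DecidableEq n]

theorem commute_kronecker_of_commute_kronecker_one {B : Matrix m m R} {A : Matrix n n R}
    {L : Matrix (m × n) (m × n) R}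
    (hB : Commute L (B ⊗ₖ (1 : Matrix n n R))) (hA : Commute L ((1 : Matrix m m R) ⊗ₖ A)) :
    Commute L (B ⊗ₖ A) := by
  have factorization : (B ⊗ₖ (1 : Matrix n n R)) * ((1 : Matrix m m R) ⊗ₖ A) = B ⊗ₖ A := by
    rw [← mul_kronecker_mul, Matrix.mul_one, Matrix.one_mul]
  exact factorization ▸ hB.mul_right hA

-- `hP` and `hB` together say that the columns of `P` are an eigenbasis of `B`; likewise for `A`.
theorem weakly_shift_invariant_iff_shift_invariant_general [IsCancelMulZero R]
    {P B : Matrix m m R} {Q A : Matrix n n R} {b : m → R} {a : n → R}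
    (hP : IsUnit P) (hQ : IsUnit Q)
    (hB : SemiconjBy P (diagonal b) B) (hA : SemiconjBy Q (diagonal a) A)
    (hdist : Function.Injective (fun p : m × n => b p.1 * a p.2))
    (L : Matrix (m × n) (m × n) R) :
    Commute L (B ⊗ₖ A) ↔
      Commute L (B ⊗ₖ (1 : Matrix n n R)) ∧ Commute L ((1 : Matrix m m R) ⊗ₖ A) := by
  refine ⟨fun hL => ?_, fun ⟨hLB, hLA⟩ => commute_kronecker_of_commute_kronecker_one hLB hLA⟩
  have hPQ : IsUnit (P ⊗ₖ Q) := hP.kronecker hQ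
  have hBA : SemiconjBy (P ⊗ₖ Q) (diagonal fun p : m × n => b p.1 * a p.2) (B ⊗ₖ A) :=
    diagonal_kronecker_diagonal b a ▸ semiconjBy_kronecker hB hA
  constructor
  · exact commute_of_commute_of_injective_diagonal hPQ hdist hBA
      ((isDiag_diagonal b).kronecker isDiag_one)
      (semiconjBy_kronecker hB (SemiconjBy.one_right Q)) hL
  · exact commute_of_commute_of_injective_diagonal hPQ hdist hBA
      (isDiag_one.kronecker (isDiag_diagonal a))
      (semiconjBy_kronecker (SemiconjBy.one_right P) hA) hL

end Kronecker

/-- **Weak shift invariance is equivalent to shift invariance for self-adjoint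
filters.** Let `B` and `A` be Hermitian matrices whose `MN` eigenvalue products
`μᵢ·λⱼ` are pairwise distinct, and let `L` be a Hermitian matrix. Then `L`
commutes with `B ⊗ A` if and only if it commutes with both `B ⊗ I_N` and
`I_M ⊗ A`. -/
theorem weakly_shift_invariant_iff_shift_invariant {M N : ℕ}
    [DecidableEq (Fin M)] [DecidableEq (Fin N)]
    (B : Matrix (Fin M) (Fin M) ℂ) (A : Matrix (Fin N) (Fin N) ℂ)
    (hB : B.IsHermitian) (hA : A.IsHermitian)
    (hdist : Function.Injective
      (fun p : Fin M × Fin N => hB.eigenvalues p.1 * hA.eigenvalues p.2))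
    (L : Matrix (Fin M × Fin N) (Fin M × Fin N) ℂ)
    (hL : L.IsHermitian) :
    L * (B ⊗ₖ A) = (B ⊗ₖ A) * L ↔
      (L * (B ⊗ₖ (1 : Matrix (Fin N) (Fin N) ℂ)) =
          (B ⊗ₖ (1 : Matrix (Fin N) (Fin N) ℂ)) * L ∧
       L * ((1 : Matrix (Fin M) (Fin M) ℂ) ⊗ₖ A) =
          ((1 : Matrix (Fin M) (Fin M) ℂ) ⊗ₖ A) * L) := by
  have hdist_complex : Function.Injective (fun p : Fin M × Fin N =>
      (hB.eigenvalues p.1 : ℂ) * (hA.eigenvalues p.2 : ℂ)) :=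
    fun _ _ h => hdist (Complex.ofReal_injective (by simpa only [Complex.ofReal_mul] using h))
  exact weakly_shift_invariant_iff_shift_invariant_general Unitary.isUnit_coe Unitary.isUnit_coe
    (semiconjBy_eigenvectorUnitary hB) (semiconjBy_eigenvectorUnitary hA) hdist_complex L
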